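/- Let p be an odd prime, m = p², d = (p+1)/2, and suppose β = (b_1,...,b_{2d}) is a strictly increasing tuple with 1 ≤ b_1 < ... < b_{2d} ≤ m-1 such that the sum over i of ⟨t·b_i⟩_m equals d·m for every t coprime to m, and suppose no proper nonempty even-cardinality subset of {b_1,...,b_{2d}} sums to a multiple of m. Then β equals (after sorting) one of the p-1 tuples β_i = (i, i+p, ..., i+(p-1)p, p(p-i)) for some 1 ≤ i ≤ p-1. -/

import Mathlib

/-- The set of entries of the tuple β_i = (i, i+p, …, i+(p-1)p, p(p-i)). -/
def betaSet (p i : ℕ) : Finset ℕ :=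
  ((Finset.range p).image (fun h => i + h * p)) ∪ {p * (p - i)}

/-- Second-order bound used for the comparison series. -/
lemma aux_second_order (s : ℂ) (hs : -(1 / 2 : ℝ) < s.re) (hs' : ‖s‖ < 4) (N : ℝ) (hN : 1 ≤ N)
    (x : ℝ) (hx0 : 0 ≤ x) (hx1 : x ≤ 1) :
    ‖((N + x : ℝ) : ℂ) ^ (-s) - ((N + 1 - x : ℝ) : ℂ) ^ (-s)
      - (1 - 2 * (x : ℂ)) * (((N : ℝ) : ℂ) ^ (-s) - ((N + 1 : ℝ) : ℂ) ^ (-s))‖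
      ≤ 40 * N ^ (-(3 / 2) : ℝ) := by
  set g : ℝ → ℂ := fun u => (u : ℂ) ^ (-s) with hg
  set g1 : ℝ → ℂ := fun u => (-s) * (u : ℂ) ^ (-s - 1) with hg1
  set g2 : ℝ → ℂ := fun u => (-s) * ((-s - 1) * (u : ℂ) ^ (-s - 1 - 1)) with hg2
  have hpow : ∀ (c : ℂ) (u : ℝ), 0 < u →
      HasDerivAt (fun y : ℝ => (y : ℂ) ^ c) (c * (u : ℂ) ^ (c - 1)) u := by
    intro c u hu
    have h := (HasDerivAt.cpow_const (c := c) (hasDerivAt_id (u : ℂ))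
      (by simp [Complex.mem_slitPlane_iff, hu])).comp_ofReal
    simpa using h
  set M : ℝ := 20 * N ^ (-(3 / 2) : ℝ) with hM
  have hM0 : 0 ≤ M := by positivity
  have hb2 : ∀ u ∈ Set.Icc N (N + 1), ‖g2 u‖ ≤ M := by
    intro u hu
    have hu0 : 0 < u := by linarith [hu.1]
    simp only [hg2, norm_mul, norm_neg]
    rw [Complex.norm_cpow_eq_rpow_re_of_pos hu0]
    have h1 : ‖-s - 1‖ ≤ 5 := by
      calc ‖-s - 1‖ ≤ ‖-s‖ + ‖(1 : ℂ)‖ := norm_sub_le _ _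
        _ ≤ 5 := by rw [norm_neg, norm_one]; linarith
    have h2 : u ^ (-s - 1 - 1).re ≤ N ^ (-(3 / 2) : ℝ) := by
      calc u ^ (-s - 1 - 1).re ≤ u ^ (-(3 / 2) : ℝ) := by
            apply Real.rpow_le_rpow_of_exponent_le (by linarith [hu.1])
            simp; linarith
        _ ≤ N ^ (-(3 / 2) : ℝ) :=
            Real.rpow_le_rpow_of_nonpos (by linarith) hu.1 (by norm_num)
    have h3 : 0 ≤ u ^ (-s - 1 - 1).re := by positivity
    calc ‖s‖ * (‖-s - 1‖ * u ^ (-s - 1 - 1).re) ≤ 4 * (5 * N ^ (-(3 / 2) : ℝ)) := by gcongr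
      _ = M := by rw [hM]; ring
  have hd1 : ∀ u ∈ Set.Icc N (N + 1), ‖g1 u - g1 N‖ ≤ M := by
    intro u hu
    have := Convex.norm_image_sub_le_of_norm_hasDerivWithin_le (f := g1) (f' := g2)
      (s := Set.Icc N (N + 1)) (x := N) (y := u) (C := M)
      (fun v hv => ((hpow (-s - 1) v (by linarith [hv.1])).const_mul (-s)).hasDerivWithinAt)
      hb2 (convex_Icc _ _) (by simp) hu
    refine this.trans ?_
    rw [Real.norm_eq_abs, abs_of_nonneg (by linarith [hu.1])]
    nlinarith [hu.2]
  set k : ℝ → ℂ := fun u => g u - (u : ℂ) * g1 N with hk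
  have hkd : ∀ u ∈ Set.Icc N (N + 1), ∀ v ∈ Set.Icc N (N + 1), ‖k v - k u‖ ≤ M := by
    intro u hu v hv
    have := Convex.norm_image_sub_le_of_norm_hasDerivWithin_le (f := k) (f' := fun w => g1 w - g1 N)
      (s := Set.Icc N (N + 1)) (x := u) (y := v) (C := M)
      (fun w hw => by
        have h1 := hpow (-s) w (by linarith [hw.1])
        have h2 := ((hasDerivAt_id (w : ℂ)).mul_const (g1 N)).comp_ofReal
        have := (h1.sub h2).hasDerivWithinAt (s := Set.Icc N (N + 1))
        refine this.congr_deriv ?_ |>.congr_of_eventuallyEq (Filter.Eventually.of_forall fun _ => rfl) rfl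
        simp [hg1])
      hd1 (convex_Icc _ _) hu hv
    refine this.trans ?_
    have : ‖v - u‖ ≤ 1 := by
      rw [Real.norm_eq_abs, abs_le]; constructor <;> linarith [hu.1, hu.2, hv.1, hv.2]
    nlinarith
  have e : ((N + x : ℝ) : ℂ) ^ (-s) - ((N + 1 - x : ℝ) : ℂ) ^ (-s)
      - (1 - 2 * (x : ℂ)) * (((N : ℝ) : ℂ) ^ (-s) - ((N + 1 : ℝ) : ℂ) ^ (-s))
      = (k (N + x) - k (N + 1 - x)) - ((1 - 2 * x : ℝ) : ℂ) * (k N - k (N + 1)) := by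
    simp only [hk, hg]; push_cast; ring
  rw [e]
  have h1 := hkd (N + 1 - x) ⟨by linarith, by linarith⟩ (N + x) ⟨by linarith, by linarith⟩
  have h2 := hkd (N + 1) ⟨by linarith, by linarith⟩ N ⟨by linarith, by linarith⟩
  have h3 : ‖((1 - 2 * x : ℝ) : ℂ)‖ ≤ 1 := by
    rw [Complex.norm_real, Real.norm_eq_abs, abs_le]; constructor <;> linarith
  calc _ ≤ ‖k (N + x) - k (N + 1 - x)‖ + ‖((1 - 2 * x : ℝ) : ℂ) * (k N - k (N + 1))‖ :=
        norm_sub_le _ _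
    _ ≤ M + 1 * M := by
        rw [norm_mul]; gcongr
    _ = _ := by rw [hM]; ring

/-- The value of the odd Hurwitz zeta function at `0`. -/
lemma aux_hurwitzZetaOdd_zero (x : ℝ) (hx0 : 0 < x) (hx1 : x < 1) :
    HurwitzZeta.hurwitzZetaOdd (x : UnitAddCircle) 0 = 1 / 2 - (x : ℂ) := by
  set U : Set ℂ := {s | -(1 / 2 : ℝ) < s.re} ∩ Metric.ball 0 4 with hU
  have hUo : IsOpen U := (isOpen_lt continuous_const Complex.continuous_re).inter Metric.isOpen_ball
  have hUc : IsPreconnected U :=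
    ((convex_halfSpace_re_gt _).inter (convex_ball _ _)).isPreconnected
  set T : ℕ → ℂ → ℂ := fun n s =>
    (((n + 1 : ℝ) + x : ℝ) : ℂ) ^ (-s) - (((n + 1 : ℝ) + 1 - x : ℝ) : ℂ) ^ (-s)
      - (1 - 2 * (x : ℂ)) * (((n + 1 : ℝ) : ℂ) ^ (-s) - (((n + 1 : ℝ) + 1 : ℝ) : ℂ) ^ (-s)) with hT
  have hTb : ∀ n, ∀ s ∈ U, ‖T n s‖ ≤ 40 * ((n + 1 : ℕ) : ℝ) ^ (-(3 / 2) : ℝ) := by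
    intro n s hs
    have := aux_second_order s hs.1 (by simpa using hs.2) (n + 1 : ℝ)
      (by linarith [(Nat.cast_nonneg n : (0 : ℝ) ≤ n)]) x hx0.le hx1.le
    simpa [hT] using this
  have hsum : Summable (fun n : ℕ => 40 * ((n + 1 : ℕ) : ℝ) ^ (-(3 / 2) : ℝ)) :=
    ((summable_nat_add_iff 1).2 (Real.summable_nat_rpow.2 (by norm_num))).mul_left _
  have hpd : ∀ r : ℝ, 0 < r → Differentiable ℂ (fun s : ℂ => (r : ℂ) ^ (-s)) := by
    intro r hr s
    exact (differentiableAt_id.neg).const_cpow (Or.inl (by exact_mod_cast hr.ne'))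
  have hTd : ∀ n, Differentiable ℂ (T n) := by
    intro n
    have hn : (0 : ℝ) ≤ n := Nat.cast_nonneg n
    exact ((hpd _ (by linarith)).sub (hpd _ (by linarith))).sub
      (((hpd _ (by linarith)).sub (hpd _ (by linarith))).const_mul _)
  have hG : DifferentiableOn ℂ (fun s => ∑' n, T n s) U :=
    Complex.differentiableOn_tsum_of_summable_norm hsum (fun n => (hTd n).differentiableOn) hUo hTb
  set F : ℂ → ℂ := fun s => ((x : ℝ) : ℂ) ^ (-s) - ((1 - x : ℝ) : ℂ) ^ (-s) + (1 - 2 * (x : ℂ))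
    + ∑' n, T n s with hF
  have hFd : DifferentiableOn ℂ F U :=
    ((((hpd _ hx0).sub (hpd _ (by linarith))).add_const _).differentiableOn).add hG
  set H : ℂ → ℂ := fun s => 2 * HurwitzZeta.hurwitzZetaOdd (x : UnitAddCircle) s with hH
  have hHd : DifferentiableOn ℂ H U :=
    ((HurwitzZeta.differentiable_hurwitzZetaOdd _).const_mul 2).differentiableOn
  have key : ∀ s : ℂ, 1 < s.re → H s = F s := by
    intro s hs
    have h1 := (HurwitzZeta.hasSum_nat_hurwitzZetaOdd_of_mem_Icc (a := x) ⟨hx0.le, hx1.le⟩ hs).mul_left 2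
    have h1' := (hasSum_nat_add_iff' 1).2 h1
    have hz : Summable (fun n : ℕ => ((n + 1 : ℝ) : ℂ) ^ (-s)) := by
      have := (summable_nat_add_iff 1).2 (Complex.summable_one_div_nat_cpow.2 hs)
      refine this.congr fun n => ?_
      simp [Complex.cpow_neg]
    have h2 := hz.hasSum.sub ((hasSum_nat_add_iff' 1).2 hz.hasSum)
    have h3 := h1'.sub (h2.mul_left (1 - 2 * (x : ℂ)))
    have h4 : HasSum (fun n => T n s) _ := h3.congr_fun fun n => by
      simp only [hT, Complex.cpow_neg]
      push_cast
      rw [show (n : ℂ) + 1 + 1 - x = n + 1 + 1 - x by ring]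
      ring
    simp only [hF, hH]
    rw [h4.tsum_eq]
    simp [Complex.cpow_neg]
    ring
  have heq : Set.EqOn H F U := by
    refine (hHd.analyticOnNhd hUo).eqOn_of_preconnected_of_eventuallyEq (hFd.analyticOnNhd hUo)
      hUc (z₀ := 2) ⟨by simp; norm_num, by simp; norm_num⟩ ?_
    filter_upwards [(isOpen_lt continuous_const Complex.continuous_re).mem_nhds
      (show (1 : ℝ) < (2 : ℂ).re by simp)] with s hs using key s hs
  have h0 := heq (show (0 : ℂ) ∈ U from ⟨by simp, by simp⟩)
  have hT0 : ∀ n, T n 0 = 0 := by intro n; simp [hT]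
  simp only [hH, hF, hT0, tsum_zero, neg_zero, Complex.cpow_zero] at h0
  linear_combination h0 / 2

/-- Nonvanishing of the first generalized Bernoulli number for odd primitive characters. -/
lemma aux_bernoulli_ne_zero {N : ℕ} [NeZero N] (hN : N ≠ 1) (χ : DirichletCharacter ℂ N)
    (hodd : χ.Odd) (hprim' : χ⁻¹.IsPrimitive) (h1 : χ ≠ 1) :
    ∑ j : ZMod N, χ j * (j.val : ℂ) ≠ 0 := by
  intro hzero
  have hL1 := DirichletCharacter.LFunction_apply_one_ne_zero (inv_ne_one.2 h1)
  have hL0 : DirichletCharacter.LFunction χ 0 = 0 := by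
    rw [DirichletCharacter.LFunction, ZMod.LFunction_def_odd hodd.to_fun]
    have : ∀ j : ZMod N, χ j * HurwitzZeta.hurwitzZetaOdd (ZMod.toAddCircle j) 0 =
        1 / 2 * χ j - 1 / N * (χ j * (j.val : ℂ)) := by
      intro j
      by_cases hj : j = 0
      · subst hj; simp [χ.map_zero' hN]
      · have hNpos : (0 : ℝ) < N := by exact_mod_cast NeZero.pos N
        rw [ZMod.toAddCircle_apply, aux_hurwitzZetaOdd_zero]
        · push_cast; ring
        · have : 0 < j.val := Nat.pos_of_ne_zero (by simpa using hj)
          positivity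
        · rw [div_lt_one hNpos]; exact_mod_cast j.val_lt
    rw [Finset.sum_congr rfl fun j _ => this j, Finset.sum_sub_distrib, ← Finset.mul_sum,
      ← Finset.mul_sum, hzero, MulChar.sum_eq_zero_of_ne_one h1]
    simp
  rw [DirichletCharacter.LFunction_eq_completed_div_gammaFactor _ _ (Or.inr hN),
    hodd.gammaFactor_def, div_eq_zero_iff] at hL0
  have hc0 : DirichletCharacter.completedLFunction χ 0 = 0 :=
    hL0.resolve_right (by simp [Complex.Gammaℝ_one])
  have hfe := hprim'.completedLFunction_one_sub 0
  rw [inv_inv, hc0, mul_zero, sub_zero] at hfe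
  apply hL1
  rw [DirichletCharacter.LFunction_eq_completed_div_gammaFactor _ _ (Or.inr hN), hfe, zero_div]

lemma aux_primitive (p : ℕ) (hp : p.Prime) (χ : DirichletCharacter ℂ (p ^ 2))
    (hw : χ (1 + p) ≠ 1) : χ.IsPrimitive := by
  have : NeZero (p ^ 2) := ⟨pow_ne_zero 2 hp.ne_zero⟩
  rw [DirichletCharacter.isPrimitive_def]
  obtain ⟨k, hk, hk'⟩ := (Nat.dvd_prime_pow hp).1 χ.conductor_dvd_level
  rcases Nat.lt_or_ge k 2 with h | h
  · exfalso
    have hd : χ.conductor ∣ p := by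
      rw [hk']; exact (pow_dvd_pow p (by omega : k ≤ 1)).trans (by simp)
    have hpd : p ∣ p ^ 2 := dvd_pow_self p (by norm_num)
    obtain ⟨h', χ₀, h0⟩ := χ.factorsThrough_conductor.mono χ hd hpd
    apply hw
    have hc : IsCoprime (1 + p : ℤ) ((p ^ 2 : ℕ) : ℤ) := by
      refine ⟨1 - p, 1, ?_⟩
      push_cast; ring
    have := DirichletCharacter.changeLevel_eq_cast_of_dvd' χ₀ h' hc
    rw [← h0] at this
    push_cast at this
    rw [this]
    simp
  · rw [hk', le_antisymm hk h]

/-- The character sum over the tuple vanishes for odd primitive characters. -/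
lemma aux_charsum (p : ℕ) (hp : p.Prime) {ι : Type*} [Fintype ι] (B : ι → ZMod (p ^ 2)) (D : ℂ)
    (hB : ∀ i, IsUnit (B i) ∨ B i * p = 0)
    (hres : ∀ t : ZMod (p ^ 2), IsUnit t → ∑ i, (((t * B i).val : ℕ) : ℂ) = D)
    (χ : DirichletCharacter ℂ (p ^ 2)) (hodd : χ.Odd) (hw : χ (1 + p) ≠ 1) :
    ∑ i, χ⁻¹ (B i) = 0 := by
  have : NeZero (p ^ 2) := ⟨pow_ne_zero 2 hp.ne_zero⟩
  have hN : p ^ 2 ≠ 1 := by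
    have := hp.two_le
    nlinarith
  have hpp : (p : ZMod (p ^ 2)) * p = 0 := by
    have : ((p ^ 2 : ℕ) : ZMod (p ^ 2)) = 0 := ZMod.natCast_self _
    rw [← this]; push_cast; ring
  have hwu : IsUnit (1 + p : ZMod (p ^ 2)) :=
    IsUnit.of_mul_eq_one (1 - p : ZMod (p ^ 2)) (by linear_combination -hpp)
  have h1 : χ ≠ 1 := by
    rintro rfl
    exact hw (MulChar.one_apply hwu)
  have hprim : χ⁻¹.IsPrimitive := by
    apply aux_primitive p hp
    rw [MulChar.inv_apply_eq_inv']
    intro h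
    exact hw (inv_eq_one.1 h)
  have hS := aux_bernoulli_ne_zero hN χ hodd hprim h1
  set S := ∑ j : ZMod (p ^ 2), χ j * (j.val : ℂ) with hSdef
  have hterm : ∀ i, ∑ t : ZMod (p ^ 2), χ t * (((t * B i).val : ℕ) : ℂ) = χ⁻¹ (B i) * S := by
    intro i
    by_cases hu : IsUnit (B i)
    · obtain ⟨u, hu⟩ := hu
      rw [← hu, hSdef, Finset.mul_sum]
      refine Fintype.sum_equiv (Units.mulRight u) _ _ fun t => ?_
      have hne : χ (u : ZMod (p ^ 2)) ≠ 0 := (u.isUnit.map χ).ne_zero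
      simp only [Units.mulRight_apply, map_mul, MulChar.inv_apply_eq_inv']
      field_simp
    · have h0 := (hB i).resolve_left hu
      rw [MulChar.map_nonunit _ hu, zero_mul]
      obtain ⟨u, huw⟩ := hwu
      have e : ∑ t : ZMod (p ^ 2), χ t * (((t * B i).val : ℕ) : ℂ) =
          χ (1 + p) * ∑ t : ZMod (p ^ 2), χ t * (((t * B i).val : ℕ) : ℂ) := by
        rw [Finset.mul_sum]
        symm
        refine Fintype.sum_equiv (Units.mulRight u) _ _ fun t => ?_
        have e2 : t * (u : ZMod (p ^ 2)) * B i = t * B i := by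
          rw [huw]; linear_combination t * h0
        rw [Units.mulRight_apply, e2, map_mul, huw]
        ring
      have e' : (1 - χ (1 + p)) * ∑ t : ZMod (p ^ 2), χ t * (((t * B i).val : ℕ) : ℂ) = 0 := by
        linear_combination e
      exact (mul_eq_zero.1 e').resolve_left (sub_ne_zero.2 (Ne.symm hw))
  have htot : ∑ i, χ⁻¹ (B i) * S = 0 := by
    rw [← Finset.sum_congr rfl fun i _ => hterm i, Finset.sum_comm]
    have : ∀ t : ZMod (p ^ 2), ∑ i, χ t * (((t * B i).val : ℕ) : ℂ) = χ t * D := by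
      intro t
      rw [← Finset.mul_sum]
      by_cases ht : IsUnit t
      · rw [hres t ht]
      · rw [MulChar.map_nonunit _ ht]; simp
    rw [Finset.sum_congr rfl fun t _ => this t, ← Finset.sum_mul,
      MulChar.sum_eq_zero_of_ne_one h1, zero_mul]
  rw [← Finset.sum_mul] at htot
  exact (mul_eq_zero.1 htot).resolve_right hS

/-- Entries propagate along the coset of the kernel of reduction mod `p`. -/
lemma aux_propagate (p : ℕ) (hp : p.Prime) {ι : Type*} [Fintype ι] (B : ι → ZMod (p ^ 2)) (D : ℂ)
    (hB : ∀ i, IsUnit (B i) ∨ B i * p = 0)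
    (hres : ∀ t : ZMod (p ^ 2), IsUnit t → ∑ i, (((t * B i).val : ℕ) : ℂ) = D)
    (hneg : ∀ i j, IsUnit (B i) → B j ≠ -B i) (i : ι) (hi : IsUnit (B i)) :
    ∃ j, B i = (1 + p) * B j := by
  classical
  have : NeZero (p ^ 2) := ⟨pow_ne_zero 2 hp.ne_zero⟩
  set w : ZMod (p ^ 2) := 1 + p with hw
  have hzero : ∀ χ : DirichletCharacter ℂ (p ^ 2),
      (1 - χ (-1)) * (1 - χ w) * ∑ j, χ (B j) = 0 := by
    intro χ
    rcases χ.even_or_odd with h | h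
    · have : χ (-1) = 1 := h
      rw [this]; ring
    · by_cases h2 : χ w = 1
      · rw [h2]; ring
      · have hodd' : χ⁻¹.Odd := by
          have : χ (-1) = -1 := h
          simp [DirichletCharacter.Odd, MulChar.inv_apply_eq_inv', this]
        have := aux_charsum p hp B D hB hres χ⁻¹ hodd' (by
          rw [MulChar.inv_apply_eq_inv']
          intro h
          exact h2 (inv_eq_one.1 h))
        rw [inv_inv] at this
        rw [this, mul_zero]
  have hsum : ∑ χ : DirichletCharacter ℂ (p ^ 2),
      χ (B i)⁻¹ * ((1 - χ (-1)) * (1 - χ w) * ∑ j, χ (B j)) = 0 := by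
    simp [hzero]
  have e : ∀ χ : DirichletCharacter ℂ (p ^ 2),
      χ (B i)⁻¹ * ((1 - χ (-1)) * (1 - χ w) * ∑ j, χ (B j)) =
      ∑ j, (χ (B i)⁻¹ * χ (B j) - χ (B i)⁻¹ * χ (-B j) - χ (B i)⁻¹ * χ (w * B j)
        + χ (B i)⁻¹ * χ (-(w * B j))) := by
    intro χ
    rw [Finset.mul_sum, Finset.mul_sum]
    refine Finset.sum_congr rfl fun j _ => ?_
    rw [← neg_one_mul (B j), ← neg_one_mul (w * B j)]
    simp only [map_mul]
    ring
  rw [Finset.sum_congr rfl fun χ _ => e χ, Finset.sum_comm] at hsum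
  simp only [Finset.sum_add_distrib, Finset.sum_sub_distrib,
    DirichletCharacter.sum_char_inv_mul_char_eq ℂ hi] at hsum
  by_contra hcon
  push Not at hcon
  have z1 : ∀ j, ¬ (B i = -B j) := fun j h => hneg i j hi (by rw [h, neg_neg])
  simp only [z1, hcon, if_false, Finset.sum_const_zero, sub_zero] at hsum
  have hφ : 0 < (p ^ 2).totient := Nat.totient_pos.2 (NeZero.pos _)
  have hnat : ∑ j, (if B i = B j then (p ^ 2).totient else 0)
      + ∑ j, (if B i = -(w * B j) then (p ^ 2).totient else 0) = 0 := by
    exact_mod_cast hsum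
  have h5 := Finset.single_le_sum (f := fun j => if B i = B j then (p ^ 2).totient else 0)
    (fun _ _ => Nat.zero_le _) (Finset.mem_univ i)
  simp only [if_true] at h5
  omega

lemma aux_propagate' (p : ℕ) (hp : p.Prime) {ι : Type*} [Fintype ι] (B : ι → ZMod (p ^ 2)) (D : ℂ)
    (hB : ∀ i, IsUnit (B i) ∨ B i * p = 0)
    (hres : ∀ t : ZMod (p ^ 2), IsUnit t → ∑ i, (((t * B i).val : ℕ) : ℂ) = D)
    (hneg : ∀ i j, IsUnit (B i) → B j ≠ -B i) (i : ι) (hi : IsUnit (B i)) (k : ℕ) :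
    ∃ j, B j = B i - k * p * B i := by
  have hpp : (p : ZMod (p ^ 2)) * p = 0 := by
    have : ((p ^ 2 : ℕ) : ZMod (p ^ 2)) = 0 := ZMod.natCast_self _
    rw [← this]; push_cast; ring
  induction k with
  | zero => exact ⟨i, by simp⟩
  | succ k ih =>
    obtain ⟨j, hj⟩ := ih
    have hju : IsUnit (B j) := by
      rw [hj]
      have : IsUnit (1 - k * p : ZMod (p ^ 2)) :=
        IsUnit.of_mul_eq_one (1 + k * p : ZMod (p ^ 2)) (by linear_combination -k ^ 2 * hpp)
      have h2 := this.mul hi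
      rwa [sub_mul, one_mul] at h2
    obtain ⟨l, hl⟩ := aux_propagate p hp B D hB hres hneg j hju
    refine ⟨l, ?_⟩
    push_cast
    linear_combination (-1 + (p : ZMod (p ^ 2))) * hl + (1 - (p : ZMod (p ^ 2))) * hj
      + (k * B i + B l) * hpp

lemma aux_main (p : ℕ) (hp : p.Prime) (hodd : Odd p)
    (b : Fin (p + 1) → ℕ) (hmono : StrictMono b)
    (hlb : ∀ i, 1 ≤ b i) (hub : ∀ i, b i ≤ p ^ 2 - 1)
    (hres : ∀ t : ℕ, Nat.Coprime t (p ^ 2) →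
      ∑ i, (t * b i) % p ^ 2 = ((p + 1) / 2) * p ^ 2)
    (hindec : ∀ S : Finset (Fin (p + 1)), S ≠ ∅ → S ≠ Finset.univ →
      Even S.card → ¬ (p ^ 2 ∣ ∑ i ∈ S, b i)) :
    ∃ i : ℕ, 1 ≤ i ∧ i ≤ p - 1 ∧ Finset.univ.image b =
      ((Finset.range p).image (fun h => i + h * p)) ∪ {p * (p - i)} := by
  have : NeZero (p ^ 2) := ⟨pow_ne_zero 2 hp.ne_zero⟩
  have hp0 : 0 < p := hp.pos
  have hp3 : 3 ≤ p := by
    have := hp.two_le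
    rcases hodd with ⟨q, hq⟩
    omega
  have hlt : ∀ i, b i < p ^ 2 := fun i => by
    have := hub i; have := pow_pos hp0 2; omega
  set B : Fin (p + 1) → ZMod (p ^ 2) := fun i => (b i : ZMod (p ^ 2)) with hBdef
  have hunit : ∀ i, ¬ p ∣ b i → IsUnit (B i) := by
    intro i hi
    rw [hBdef]
    exact (ZMod.isUnit_iff_coprime _ _).2 (Nat.Coprime.pow_right 2 ((hp.coprime_iff_not_dvd.2 hi).symm))
  have hunit' : ∀ i, IsUnit (B i) → ¬ p ∣ b i := by
    intro i hi hd
    have := (ZMod.isUnit_iff_coprime _ _).1 hi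
    have h2 : p ∣ 1 := by
      rw [← this]; exact Nat.dvd_gcd hd (dvd_pow_self p (by norm_num))
    exact hp.one_lt.ne' (Nat.dvd_one.1 h2)
  have hB : ∀ i, IsUnit (B i) ∨ B i * p = 0 := by
    intro i
    by_cases hd : p ∣ b i
    · right
      have : ((b i * p : ℕ) : ZMod (p ^ 2)) = 0 := by
        rw [ZMod.natCast_eq_zero_iff, pow_two]
        exact Nat.mul_dvd_mul_right hd p
      simpa [hBdef] using this
    · exact Or.inl (hunit i hd)
  have hres' : ∀ t : ZMod (p ^ 2), IsUnit t → ∑ i, (((t * B i).val : ℕ) : ℂ) =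
      (((p + 1) / 2 * p ^ 2 : ℕ) : ℂ) := by
    intro t ht
    have hc : Nat.Coprime t.val (p ^ 2) := by
      rw [← ZMod.isUnit_iff_coprime, ZMod.natCast_zmod_val]; exact ht
    rw [← hres t.val hc, Nat.cast_sum]
    refine Finset.sum_congr rfl fun i _ => ?_
    congr 1
    rw [ZMod.val_mul, hBdef]
    simp only [ZMod.val_natCast]
    rw [Nat.mul_mod_mod]
  have hneg : ∀ i j, IsUnit (B i) → B j ≠ -B i := by
    intro i j hi hj
    have hd : p ^ 2 ∣ b i + b j := by
      rw [← ZMod.natCast_eq_zero_iff]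
      push_cast
      change B i + B j = 0
      rw [hj]; ring
    by_cases hij : i = j
    · subst hij
      apply hunit' i hi
      have h1 : p ∣ 2 * b i := by
        rw [two_mul]; exact (dvd_pow_self p (by norm_num)).trans hd
      rcases (hp.dvd_mul).1 h1 with h | h
      · have := Nat.le_of_dvd (by norm_num) h
        omega
      · exact h
    · refine hindec {i, j} (by simp) ?_ (by rw [Finset.card_pair hij]; decide) ?_
      · intro h
        have := congrArg Finset.card h
        rw [Finset.card_pair hij, Finset.card_univ, Fintype.card_fin] at this
        omega
      · rwa [Finset.sum_pair hij]
  -- there is an entry prime to `p`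
  have hex : ∃ i, ¬ p ∣ b i := by
    by_contra hcon
    push Not at hcon
    have hinj : Function.Injective (fun i => (⟨b i / p, by
        rw [Nat.div_lt_iff_lt_mul hp0]; have := hlt i; rwa [pow_two] at this⟩ : Fin p)) := by
      intro i j hij
      have h1 : b i / p = b j / p := by simpa using hij
      apply hmono.injective
      rw [← Nat.div_mul_cancel (hcon i), ← Nat.div_mul_cancel (hcon j), h1]
    have := Fintype.card_le_of_injective _ hinj
    simp at this
  obtain ⟨i0, hi0⟩ := hex
  have hu := hunit i0 hi0
  set r := b i0 % p with hr
  have hr1 : 1 ≤ r := by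
    rw [Nat.dvd_iff_mod_eq_zero] at hi0; omega
  have hrp : r < p := Nat.mod_lt _ hp0
  set A := (Finset.range p).image (fun h => r + h * p) with hA
  have hAcard : A.card = p := by
    rw [hA, Finset.card_image_of_injective, Finset.card_range]
    intro x y hxy
    have : x * p = y * p := by simpa using hxy
    exact Nat.eq_of_mul_eq_mul_right hp0 this
  have hAsub : A ⊆ Finset.univ.image b := by
    intro a ha
    obtain ⟨h, hh, rfl⟩ := Finset.mem_image.1 ha
    have hh' : h < p := Finset.mem_range.1 hh
    set c : ZMod (p ^ 2) :=
      (((b i0 / p : ℕ) : ZMod (p ^ 2)) - (h : ZMod (p ^ 2))) * (B i0)⁻¹ with hc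
    obtain ⟨j, hj⟩ := aux_propagate' p hp B _ hB hres' hneg i0 hu c.val
    rw [ZMod.natCast_zmod_val] at hj
    have hinv : (B i0)⁻¹ * B i0 = 1 := ZMod.inv_mul_of_unit _ hu
    have hdecomp : B i0 = r + p * (b i0 / p : ℕ) := by
      have := Nat.mod_add_div (b i0) p
      rw [hBdef]
      simp only
      conv_lhs => rw [← this]
      push_cast; ring
    have hj2 : B j = ((r + h * p : ℕ) : ZMod (p ^ 2)) := by
      rw [hj, hc]
      push_cast
      linear_combination hdecomp - (((b i0 / p : ℕ) : ZMod (p ^ 2)) - (h : ZMod (p ^ 2))) * p * hinv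
    have hj3 : b j = r + h * p := by
      have := (ZMod.natCast_eq_natCast_iff' (b j) (r + h * p) (p ^ 2)).1 hj2
      rwa [Nat.mod_eq_of_lt (hlt j), Nat.mod_eq_of_lt] at this
      nlinarith
    exact Finset.mem_image.2 ⟨j, Finset.mem_univ _, hj3⟩
  have hbcard : (Finset.univ.image b).card = p + 1 := by
    rw [Finset.card_image_of_injective _ hmono.injective, Finset.card_univ, Fintype.card_fin]
  have hdiff : (Finset.univ.image b \ A).card = 1 := by
    rw [Finset.card_sdiff_of_subset hAsub, hbcard, hAcard]; omega
  obtain ⟨x, hx⟩ := Finset.card_eq_one.1 hdiff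
  have himg : Finset.univ.image b = A ∪ {x} := by
    rw [← hx, Finset.union_sdiff_of_subset hAsub]
  have hsum : ∑ y ∈ Finset.univ.image b, y = (p + 1) / 2 * p ^ 2 := by
    rw [Finset.sum_image (fun _ _ _ _ h => hmono.injective h), ← hres 1 (by simp)]
    refine Finset.sum_congr rfl fun i _ => ?_
    rw [one_mul, Nat.mod_eq_of_lt (hlt i)]
  have hsA : ∑ y ∈ A, y = p * r + (∑ h ∈ Finset.range p, h) * p := by
    rw [hA, Finset.sum_image, Finset.sum_add_distrib, Finset.sum_mul]
    · simp
    · intro x _ y _ hxy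
      have : x * p = y * p := by simpa using hxy
      exact Nat.eq_of_mul_eq_mul_right hp0 this
  rw [← Finset.sum_sdiff hAsub, hx, Finset.sum_singleton, hsA] at hsum
  refine ⟨r, hr1, by omega, ?_⟩
  rw [himg]
  have hxval : x = p * (p - r) := by
    obtain ⟨q, hq⟩ := hodd
    have hg : (∑ h ∈ Finset.range p, h) = p * q := by
      have := Finset.sum_range_id_mul_two p
      have h2 : p - 1 = 2 * q := by omega
      rw [h2] at this
      nlinarith
    have h3 : (p + 1) / 2 = q + 1 := by omega
    rw [hg, h3] at hsum
    obtain ⟨c, hc⟩ := Nat.exists_eq_add_of_le hrp.le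
    have : p - r = c := by omega
    rw [this]
    have e : p * p = p * r + p * c := by rw [← mul_add, ← hc]
    nlinarith
  rw [hxval]

/-- every indecomposable element of 𝔅_{p²}^{(p+1)/2} is (after
sorting) one of the tuples β_i for some 1 ≤ i ≤ p-1. -/
theorem stmt13 (p : ℕ) (hp : p.Prime) (hodd : Odd p)
    (b : Fin (p + 1) → ℕ) (hmono : StrictMono b)
    (hlb : ∀ i, 1 ≤ b i) (hub : ∀ i, b i ≤ p ^ 2 - 1)
    (hres : ∀ t : ℕ, Nat.Coprime t (p ^ 2) →
      ∑ i, (t * b i) % p ^ 2 = ((p + 1) / 2) * p ^ 2)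
    (hindec : ∀ S : Finset (Fin (p + 1)), S ≠ ∅ → S ≠ Finset.univ →
      Even S.card → ¬ (p ^ 2 ∣ ∑ i ∈ S, b i)) :
    ∃ i : ℕ, 1 ≤ i ∧ i ≤ p - 1 ∧ Finset.univ.image b = betaSet p i := by
  exact aux_main p hp hodd b hmono hlb hub hres hindec
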